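/- Let φ ∈ Γ₀(H) satisfy φ*(H) ⊂ [0,+∞] and (φ*)⁻¹((0,+∞)) ≠ ∅, let s: G → [−∞,+∞] be such that −s ∈ Γ₀(G) and S = s⁻¹((0,+∞)) ≠ ∅, let γ ∈ (0,+∞), and let (x,y) ∈ Ω₂. Then the unique η ∈ [0,+∞) satisfying (−s)_▽( prox_{(γ·φ*(prox_{(η/γ)⊙φ*}(x/γ)))⊙(−s)_▽} y ) + η = 0 equals 0, and prox_{γ(φ▷s)}(x,y) = ( x − γ·proj_{cl dom φ*}(x/γ), prox_{γ·φ*(proj_{cl dom φ*}(x/γ))·(−s)_▽} y ). -/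

import Mathlib

open scoped Classical

noncomputable section

/-- Effective domain of an extended-real-valued function. -/
def edom {E : Type*} (f : E → EReal) : Set E := {x | f x < ⊤}

/-- Convexity of an extended-real-valued function, via its epigraph. -/
def ConvexEpi {E : Type*} [AddCommGroup E] [Module ℝ E] (f : E → EReal) : Prop :=
  Convex ℝ {p : E × ℝ | f p.1 ≤ (p.2 : EReal)}

/-- `f ∈ Γ₀(E)`: proper, lower semicontinuous, convex, with values in `(-∞, +∞]`. -/
def IsGamma0 {E : Type*} [AddCommGroup E] [Module ℝ E] [TopologicalSpace E]
    (f : E → EReal) : Prop :=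
  (∃ x, f x ≠ ⊤) ∧ (∀ x, f x ≠ ⊥) ∧ LowerSemicontinuous f ∧ ConvexEpi f

/-- Proximity operator: the (unique, for `f ∈ Γ₀`) minimizer of
`y ↦ f y + ‖x - y‖² / 2`. -/
def prox {E : Type*} [NormedAddCommGroup E] [InnerProductSpace ℝ E]
    (f : E → EReal) (x : E) : E :=
  Classical.epsilon fun p =>
    ∀ y, f p + ((‖x - p‖ ^ 2 / 2 : ℝ) : EReal) ≤ f y + ((‖x - y‖ ^ 2 / 2 : ℝ) : EReal)

/-- Metric projection onto a set. -/
def projC {E : Type*} [NormedAddCommGroup E] (C : Set E) (x : E) : E :=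
  Classical.epsilon fun p => p ∈ C ∧ ∀ y ∈ C, ‖x - p‖ ≤ ‖x - y‖

/-- Fenchel conjugate. -/
def fconj {E : Type*} [NormedAddCommGroup E] [InnerProductSpace ℝ E]
    (f : E → EReal) (y : E) : EReal :=
  ⨆ x, ((inner ℝ x y : ℝ) : EReal) - f x

/-- Plain scalar multiple `ξ·f`. -/
def smulE {E : Type*} (ξ : ℝ) (f : E → EReal) : E → EReal := fun x => (ξ : EReal) * f x

/-- The operation `ξ ⊙ f`: indicator of `cl (dom f)` if `ξ = 0`, and `ξ·f` if `ξ > 0`. -/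
def rscale {E : Type*} [TopologicalSpace E] (ξ : ℝ) (f : E → EReal) : E → EReal :=
  if ξ = 0 then fun x => if x ∈ closure (edom f) then (0 : EReal) else ⊤
  else fun x => (ξ : EReal) * f x

/-- `f^∨`: agrees with `f` where `-∞ < f < 0`, and is `+∞` elsewhere. -/
def pbas {E : Type*} (f : E → EReal) : E → EReal :=
  fun x => if ⊥ < f x ∧ f x < 0 then f x else ⊤

/-- `f^∧`: agrees with `f` where `0 < f < +∞`, and is `+∞` elsewhere. -/
def phaut {E : Type*} (f : E → EReal) : E → EReal :=
  fun x => if 0 < f x ∧ f x < ⊤ then f x else ⊤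

/-- `f_▽ = (f^∨)**`. -/
def basEnv {E : Type*} [NormedAddCommGroup E] [InnerProductSpace ℝ E]
    (f : E → EReal) : E → EReal :=
  fconj (fconj (pbas f))

/-- `f_▲ = (f^∧)**`. -/
def hautEnv {E : Type*} [NormedAddCommGroup E] [InnerProductSpace ℝ E]
    (f : E → EReal) : E → EReal :=
  fconj (fconj (phaut f))

/-- `S = s⁻¹((0, +∞))`. -/
def sdom {G : Type*} (s : G → EReal) : Set G := {v | 0 < s v ∧ s v < ⊤}

/-- The preperspective `φ ⋉ s`, on the Hilbert direct sum `H ⊕ G`. -/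
def prePersp {H G : Type*} [NormedAddCommGroup H] [InnerProductSpace ℝ H]
    [NormedAddCommGroup G] [InnerProductSpace ℝ G]
    (φ : H → EReal) (s : G → EReal) : WithLp 2 (H × G) → EReal := fun q =>
  if 0 < s ((WithLp.equiv 2 (H × G)) q).2 ∧ s ((WithLp.equiv 2 (H × G)) q).2 < ⊤ then
    s ((WithLp.equiv 2 (H × G)) q).2 *
      φ ((s ((WithLp.equiv 2 (H × G)) q).2).toReal⁻¹ • ((WithLp.equiv 2 (H × G)) q).1)
  else ⊤

/-- The perspective `φ ▷ s`: the largest lower semicontinuous convex minorant of the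
preperspective `φ ⋉ s`, on the Hilbert direct sum `H ⊕ G`. -/
def persp {H G : Type*} [NormedAddCommGroup H] [InnerProductSpace ℝ H]
    [NormedAddCommGroup G] [InnerProductSpace ℝ G]
    (φ : H → EReal) (s : G → EReal) : WithLp 2 (H × G) → EReal := fun q =>
  sSup {t : EReal | ∃ g : WithLp 2 (H × G) → EReal,
    LowerSemicontinuous g ∧ ConvexEpi g ∧ (∀ r, g r ≤ prePersp φ s r) ∧ t = g q}

/-- The point `(x, y)` in the Hilbert direct sum `H ⊕ G`. -/
def pairHG {H G : Type*} (x : H) (y : G) : WithLp 2 (H × G) :=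
  (WithLp.equiv 2 (H × G)).symm (x, y)

end
noncomputable section

/-- `Ω₁` of Proposition 4.2. -/
def Omega1 {H G : Type*} [NormedAddCommGroup H] [InnerProductSpace ℝ H]
    [NormedAddCommGroup G] [InnerProductSpace ℝ G]
    (φ : H → EReal) (s : G → EReal) (γ : ℝ) : Set (H × G) :=
  {p | fconj φ (projC (closure (edom (fconj φ))) (γ⁻¹ • p.1)) = 0 ∧
       s (projC (closure (sdom s)) p.2) = 0}

/-- `Ω₂` of Proposition 4.2. -/
def Omega2 {H G : Type*} [NormedAddCommGroup H] [InnerProductSpace ℝ H]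
    [NormedAddCommGroup G] [InnerProductSpace ℝ G]
    (φ : H → EReal) (s : G → EReal) (γ : ℝ) : Set (H × G) :=
  {p | (0 < fconj φ (projC (closure (edom (fconj φ))) (γ⁻¹ • p.1)) ∧
        fconj φ (projC (closure (edom (fconj φ))) (γ⁻¹ • p.1)) < ⊤) ∧
       s (prox (smulE (γ * (fconj φ (projC (closure (edom (fconj φ))) (γ⁻¹ • p.1))).toReal)
            (basEnv fun v => -(s v))) p.2) = 0}

/-- `Ω₃` of Proposition 4.2. -/
def Omega3 {H G : Type*} [NormedAddCommGroup H] [InnerProductSpace ℝ H]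
    [NormedAddCommGroup G] [InnerProductSpace ℝ G]
    (φ : H → EReal) (s : G → EReal) (γ : ℝ) : Set (H × G) :=
  {p | fconj φ (prox (smulE ((s (projC (closure (sdom s)) p.2)).toReal / γ) (fconj φ))
          (γ⁻¹ • p.1)) = 0 ∧
       0 < s (projC (closure (sdom s)) p.2) ∧ s (projC (closure (sdom s)) p.2) < ⊤}

/-- The equation (4.2) for `η` in Theorem 4.1(i). -/
def eta7eq {H G : Type*} [NormedAddCommGroup H] [InnerProductSpace ℝ H]
    [NormedAddCommGroup G] [InnerProductSpace ℝ G]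
    (φ : H → EReal) (s : G → EReal) (γ : ℝ) (x : H) (y : G) (η : ℝ) : Prop :=
  basEnv (fun v => -(s v))
      (prox (rscale (γ * (fconj φ (prox (rscale (η / γ) (fconj φ)) (γ⁻¹ • x))).toReal)
        (basEnv fun v => -(s v))) y) + (η : EReal) = 0

end

/-!
By Fenchel–Moreau, `φ ▷ s` is the biconjugate of `φ ⋉ s`, and the conjugate of `φ ⋉ s` is at most
`c` at `(u, w)` iff `s(b) φ*(u) + ⟨b, w⟩ ≤ c` for all `b ∈ S`. Let `π` be the projection of `x / γ`
onto `cl dom φ*` and `q` the second component of the claimed proximal point. The formula amounts to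
`(π, (y - q) / γ)` being a subgradient of `φ ▷ s` at `(x - γ π, q)`. Tested against affine minorants
of `φ ⋉ s`, this splits into the variational inequality of the projection `π` and the optimality
condition of the proximal point `q` of `γ φ*(π) (-s)_▽`.

For uniqueness of `η`: `ξ ↦ f(prox_{ξ ⊙ f} x)` is decreasing. Applied to `φ*` and then to `(-s)_▽`,
this makes the first summand of the equation an increasing function of `η`, so that its left-hand
side is strictly increasing.
-/

open Filter Topology
open scoped InnerProductSpace

theorem ereal_coe_mul_le_coe_iff {ξ t : ℝ} {a : EReal} (hξ : 0 < ξ) :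
    (ξ : EReal) * a ≤ t ↔ a ≤ ((t / ξ : ℝ) : EReal) := by
  rw [EReal.coe_div, EReal.le_div_iff_mul_le (EReal.coe_pos.2 hξ) (EReal.coe_ne_top ξ), mul_comm]

theorem ereal_coe_le_coe_mul_iff {ξ t : ℝ} {a : EReal} (hξ : 0 < ξ) :
    (t : EReal) ≤ ξ * a ↔ ((t / ξ : ℝ) : EReal) ≤ a := by
  rw [EReal.coe_div, EReal.div_le_iff_le_mul (EReal.coe_pos.2 hξ) (EReal.coe_ne_top ξ)]

theorem ereal_eq_coe_neg_of_add_coe_eq_zero {a : EReal} {t : ℝ} (h : a + t = 0) :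
    a = ((-t : ℝ) : EReal) := by
  induction a with
  | bot => simp at h
  | coe r => exact_mod_cast eq_neg_of_add_eq_zero_left (by exact_mod_cast h)
  | top => simp at h

section Convexity

variable {E : Type*} [AddCommGroup E] [Module ℝ E] {f g : E → EReal}

theorem ConvexEpi.apply_combo_le (hf : ConvexEpi f) {x y : E} {r t a b : ℝ} (hx : f x ≤ r)
    (hy : f y ≤ t) (ha : 0 ≤ a) (hb : 0 ≤ b) (hab : a + b = 1) :
    f (a • x + b • y) ≤ ((a * r + b * t : ℝ) : EReal) :=
  hf (x := (x, r)) (y := (y, t)) hx hy ha hb hab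

theorem ConvexEpi.convex_edom (hf : ConvexEpi f) : Convex ℝ (edom f) := by
  intro x hx y hy a b ha hb hab
  obtain ⟨r, hr, -⟩ := EReal.lt_iff_exists_real_btwn.1 hx
  obtain ⟨t, ht, -⟩ := EReal.lt_iff_exists_real_btwn.1 hy
  exact (hf.apply_combo_le hr.le ht.le ha hb hab).trans_lt (EReal.coe_lt_top _)

theorem ConvexEpi.sup (hf : ConvexEpi f) (hg : ConvexEpi g) : ConvexEpi fun x => f x ⊔ g x := by
  have hepi : {p : E × ℝ | f p.1 ⊔ g p.1 ≤ (p.2 : EReal)} =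
      {p : E × ℝ | f p.1 ≤ (p.2 : EReal)} ∩ {p : E × ℝ | g p.1 ≤ (p.2 : EReal)} := by
    ext p
    simp only [Set.mem_ofPred_eq, Set.mem_inter_iff, sup_le_iff]
  unfold ConvexEpi
  rw [hepi]
  exact hf.inter hg

theorem convexEpi_smulE (hf : ConvexEpi f) {ξ : ℝ} (hξ : 0 < ξ) : ConvexEpi (smulE ξ f) := by
  rintro ⟨x, r⟩ hx ⟨y, t⟩ hy a b ha hb hab
  have hx' : f x ≤ ((r / ξ : ℝ) : EReal) := (ereal_coe_mul_le_coe_iff hξ).1 hx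
  have hy' : f y ≤ ((t / ξ : ℝ) : EReal) := (ereal_coe_mul_le_coe_iff hξ).1 hy
  have hcombo : a * (r / ξ) + b * (t / ξ) = (a * r + b * t) / ξ := by ring
  exact (ereal_coe_mul_le_coe_iff hξ).2 (hcombo ▸ hf.apply_combo_le hx' hy' ha hb hab)

theorem ConvexEpi.mem_closure_neg [TopologicalSpace E] [ContinuousAdd E] [ContinuousSMul ℝ E]
    (hf : ConvexEpi f) {q b : E} (hq : f q ≤ 0) (hb : f b < 0) : q ∈ closure {z | f z < 0} := by
  obtain ⟨r, hbr, hr⟩ := EReal.lt_iff_exists_real_btwn.1 hb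
  rw [EReal.coe_neg'] at hr
  have hcont : Continuous fun c : ℝ => (1 - c) • q + c • b := by fun_prop
  have hlim : Tendsto (fun c : ℝ => (1 - c) • q + c • b) (𝓝[>] 0) (𝓝 q) := by
    simpa using (hcont.tendsto 0).mono_left nhdsWithin_le_nhds
  refine mem_closure_of_tendsto hlim ?_
  filter_upwards [Ioc_mem_nhdsGT (zero_lt_one' ℝ)] with c hc
  have hle := hf.apply_combo_le (r := 0) hq hbr.le (sub_nonneg.2 hc.2) hc.1.le
    (sub_add_cancel 1 c)
  refine hle.trans_lt (EReal.coe_neg'.2 ?_)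
  rw [mul_zero, zero_add]
  exact mul_neg_of_pos_of_neg hc.1 hr

end Convexity

section Gamma0

variable {E : Type*} [AddCommGroup E] [Module ℝ E] [TopologicalSpace E] {f : E → EReal}

theorem IsGamma0.apply_eq_coe (hf : IsGamma0 f) {x : E} (hx : f x ≠ ⊤) : ∃ r : ℝ, f x = r :=
  ⟨_, (EReal.coe_toReal hx (hf.2.1 x)).symm⟩

theorem IsGamma0.exists_eq_coe (hf : IsGamma0 f) : ∃ (x : E) (r : ℝ), f x = r :=
  hf.1.imp fun _ => hf.apply_eq_coe

theorem isGamma0_smulE (hf : IsGamma0 f) {ξ : ℝ} (hξ : 0 < ξ) : IsGamma0 (smulE ξ f) := by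
  obtain ⟨x, r, hx⟩ := hf.exists_eq_coe
  obtain ⟨-, hbot, hlsc, hconv⟩ := hf
  refine ⟨⟨x, ?_⟩, fun z hz => ?_, ?_, convexEpi_smulE hconv hξ⟩
  · rw [smulE, hx, ← EReal.coe_mul]
    exact EReal.coe_ne_top _
  · simp [smulE, EReal.mul_eq_bot, hbot z, hξ.not_gt] at hz
  · have hcont : Continuous fun a : EReal => (ξ : EReal) * a :=
      continuous_iff_continuousAt.2 fun a =>
        EReal.Tendsto.const_mul tendsto_id (Or.inl (EReal.coe_ne_bot ξ))
          (Or.inl (EReal.coe_ne_top ξ))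
    exact hcont.comp_lowerSemicontinuous hlsc fun a b hab =>
      mul_le_mul_of_nonneg_left hab (EReal.coe_nonneg.2 hξ.le)

end Gamma0

section Indicator

variable {E : Type*} [TopologicalSpace E]

/-- The indicator function `ι_C` of convex analysis: `0` on `C` and `+∞` elsewhere; it
turns `rscale 0 f` into a named function whose proximity operator is a projection. -/
noncomputable def convexIndicator {E : Type*} (C : Set E) : E → EReal :=
  fun x => if x ∈ C then 0 else ⊤

theorem rscale_zero (f : E → EReal) :
    rscale 0 f = convexIndicator (closure (edom f)) :=
  if_pos rfl

theorem rscale_of_ne_zero (f : E → EReal) {ξ : ℝ} (hξ : ξ ≠ 0) :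
    rscale ξ f = smulE ξ f :=
  if_neg hξ

theorem rscale_apply_of_eq_coe {f : E → EReal} (ξ : ℝ) {x : E} {c : ℝ} (hx : f x = c) :
    rscale ξ f x = ((ξ * c : ℝ) : EReal) := by
  rcases eq_or_ne ξ 0 with rfl | hξ
  · have hmem : x ∈ closure (edom f) := subset_closure (hx.trans_lt (EReal.coe_lt_top c))
    rw [rscale_zero, convexIndicator, if_pos hmem, zero_mul, EReal.coe_zero]
  · rw [rscale_of_ne_zero f hξ, smulE, hx, EReal.coe_mul]

theorem lowerSemicontinuous_convexIndicator {C : Set E} (hC : IsClosed C) :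
    LowerSemicontinuous (convexIndicator C) := by
  intro x a ha
  by_cases hx : x ∈ C
  · refine Eventually.of_forall fun z => ha.trans_le ?_
    rw [convexIndicator, if_pos hx]
    unfold convexIndicator
    split_ifs <;> simp
  · filter_upwards [hC.isOpen_compl.mem_nhds hx] with z hz
    have hxz : convexIndicator C z = convexIndicator C x := (if_neg hz).trans (if_neg hx).symm
    rwa [hxz]

theorem convexEpi_convexIndicator {E : Type*} [AddCommGroup E] [Module ℝ E] {C : Set E}
    (hC : Convex ℝ C) : ConvexEpi (convexIndicator C) := by
  have hepi : {p : E × ℝ | convexIndicator C p.1 ≤ (p.2 : EReal)} = C ×ˢ Set.Ici 0 := by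
    ext p
    by_cases hp : p.1 ∈ C <;> simp [convexIndicator, hp]
  unfold ConvexEpi
  rw [hepi]
  exact hC.prod (convex_Ici 0)

variable [AddCommGroup E] [Module ℝ E]

theorem isGamma0_convexIndicator {C : Set E} (hne : C.Nonempty) (hcl : IsClosed C)
    (hC : Convex ℝ C) : IsGamma0 (convexIndicator C) := by
  obtain ⟨x, hx⟩ := hne
  refine ⟨⟨x, ?_⟩, fun z => ?_, lowerSemicontinuous_convexIndicator hcl,
    convexEpi_convexIndicator hC⟩
  · rw [convexIndicator, if_pos hx]
    exact EReal.zero_ne_top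
  · unfold convexIndicator
    split_ifs <;> simp

theorem isGamma0_rscale [IsTopologicalAddGroup E] [ContinuousSMul ℝ E] {f : E → EReal}
    (hf : IsGamma0 f) {ξ : ℝ} (hξ : 0 ≤ ξ) : IsGamma0 (rscale ξ f) := by
  rcases hξ.eq_or_lt with rfl | hξ
  · obtain ⟨⟨x, hx⟩, -, -, hconv⟩ := hf
    rw [rscale_zero]
    exact isGamma0_convexIndicator ⟨x, subset_closure (lt_top_iff_ne_top.2 hx)⟩ isClosed_closure
      hconv.convex_edom.closure
  · rw [rscale_of_ne_zero f hξ.ne']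
    exact isGamma0_smulE hf hξ

end Indicator

section Fenchel

variable {E : Type*} [NormedAddCommGroup E] [InnerProductSpace ℝ E] {f g : E → EReal}

theorem fconj_le_coe_iff {y : E} {c : ℝ} :
    fconj f y ≤ c ↔ ∀ x, ((⟪x, y⟫_ℝ - c : ℝ) : EReal) ≤ f x := by
  refine iSup_le_iff.trans (forall_congr' fun x => ?_)
  rw [EReal.sub_le_iff_le_add (Or.inr (EReal.coe_ne_top c)) (Or.inr (EReal.coe_ne_bot c)), add_comm,
    EReal.coe_sub, EReal.sub_le_iff_le_add (Or.inl (EReal.coe_ne_bot c))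
      (Or.inl (EReal.coe_ne_top c)), add_comm]

theorem coe_inner_sub_le_fconj {x : E} {r : ℝ} (hx : f x ≤ r) (y : E) :
    ((⟪x, y⟫_ℝ - r : ℝ) : EReal) ≤ fconj f y := by
  rw [EReal.coe_sub]
  exact (EReal.sub_le_sub le_rfl hx).trans (le_iSup (fun z => (⟪z, y⟫_ℝ : EReal) - f z) x)

theorem fconj_antitone (hfg : g ≤ f) : fconj f ≤ fconj g := fun _ =>
  iSup_mono fun x => EReal.sub_le_sub le_rfl (hfg x)

theorem fconj_fconj_le : fconj (fconj f) ≤ f := by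
  refine fun x => EReal.le_of_forall_lt_iff_le.1 fun r hr => fconj_le_coe_iff.2 fun y => ?_
  rw [real_inner_comm]
  exact coe_inner_sub_le_fconj hr.le y

theorem fconj_ne_bot {x : E} (hx : f x ≠ ⊤) (y : E) : fconj f y ≠ ⊥ := by
  obtain ⟨r, hr, -⟩ := EReal.lt_iff_exists_real_btwn.1 (lt_top_iff_ne_top.2 hx)
  exact ne_bot_of_le_ne_bot (EReal.coe_ne_bot _) (coe_inner_sub_le_fconj hr.le y)

theorem exists_ne_top_of_fconj_ne_bot {y : E} (hy : fconj f y ≠ ⊥) : ∃ x, f x ≠ ⊤ := by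
  contrapose! hy
  simp [fconj, hy]

theorem lowerSemicontinuous_fconj : LowerSemicontinuous (fconj f) := by
  refine lowerSemicontinuous_iSup fun x => Continuous.lowerSemicontinuous ?_
  have hinner : Continuous fun y => (⟪x, y⟫_ℝ : EReal) :=
    continuous_coe_real_ereal.comp (by fun_prop)
  exact continuous_iff_continuousAt.2 fun y =>
    (EReal.continuousAt_add (Or.inl (EReal.coe_ne_top _)) (Or.inl (EReal.coe_ne_bot _))).comp₂
      hinner.continuousAt continuousAt_const

theorem convexEpi_fconj : ConvexEpi (fconj f) := by
  have hepi : {p : E × ℝ | fconj f p.1 ≤ (p.2 : EReal)} =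
      ⋂ x, (innerₗ E x ∘ₗ LinearMap.fst ℝ E ℝ - LinearMap.snd ℝ E ℝ) ⁻¹'
        {c : ℝ | (c : EReal) ≤ f x} := by
    ext p
    simp [fconj_le_coe_iff]
  unfold ConvexEpi
  rw [hepi]
  refine convex_iInter fun x => Convex.linear_preimage (Set.OrdConnected.convex ⟨?_⟩) _
  exact fun _ _ b hb c hc => (EReal.coe_le_coe_iff.2 hc.2).trans hb

theorem isGamma0_fconj (hf : ∃ x, f x ≠ ⊤) (hf' : ∃ y, fconj f y ≠ ⊤) : IsGamma0 (fconj f) :=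
  ⟨hf', hf.elim fun _ hx => fconj_ne_bot hx, lowerSemicontinuous_fconj, convexEpi_fconj⟩

theorem fconj_le_of_separating {u : E} {k b : ℝ} (hk : 0 < k)
    (hsep : ∀ (z : E) (t : ℝ), f z ≤ t → b ≤ ⟪z, u⟫_ℝ + k * t) :
    fconj f (-(k⁻¹ • u)) ≤ ((-(b / k) : ℝ) : EReal) := by
  refine fconj_le_coe_iff.2 fun z => EReal.le_of_forall_lt_iff_le.1 fun t ht => ?_
  have hle : (b - ⟪z, u⟫_ℝ) / k ≤ t := (div_le_iff₀' hk).2 (by linarith [hsep z t ht.le])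
  rw [EReal.coe_le_coe_iff, inner_neg_right, inner_smul_right]
  refine le_trans (le_of_eq ?_) hle
  field_simp
  ring

theorem IsGamma0.exists_separating [CompleteSpace E] (hf : IsGamma0 f) {x : E} {r : ℝ}
    (hr : r < f x) : ∃ (u : E) (k b : ℝ), 0 ≤ k ∧ ⟪x, u⟫_ℝ + k * r < b ∧
      ∀ (z : E) (t : ℝ), f z ≤ t → b < ⟪z, u⟫_ℝ + k * t := by
  obtain ⟨x₀, r₀, hx₀⟩ := hf.exists_eq_coe
  obtain ⟨-, -, hlsc, hconv⟩ := hf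
  have hclosed : IsClosed {p : E × ℝ | f p.1 ≤ (p.2 : EReal)} :=
    hlsc.isClosed_epigraph.preimage
      (continuous_fst.prodMk (continuous_coe_real_ereal.comp continuous_snd))
  obtain ⟨F, b, hxb, hb⟩ := geometric_hahn_banach_point_closed hconv hclosed
    (show (x, r) ∉ {p : E × ℝ | f p.1 ≤ (p.2 : EReal)} from hr.not_ge)
  set u := (InnerProductSpace.toDual ℝ E).symm (F.comp (ContinuousLinearMap.inl ℝ E ℝ))
  have hF (z : E) (t : ℝ) : F (z, t) = ⟪z, u⟫_ℝ + F (0, 1) * t := by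
    rw [real_inner_comm, InnerProductSpace.toDual_symm_apply]
    have hdecomp : (z, t) = (z, 0) + t • ((0 : E), (1 : ℝ)) := by simp
    rw [hdecomp, map_add, map_smul]
    simp [mul_comm]
  have hsep (z : E) (t : ℝ) (hzt : f z ≤ t) : b < ⟪z, u⟫_ℝ + F (0, 1) * t := hF z t ▸ hb (z, t) hzt
  refine ⟨u, F (0, 1), b, ?_, hF x r ▸ hxb, hsep⟩
  by_contra! hk
  obtain ⟨n, hn⟩ := Archimedean.arch (⟪x₀, u⟫_ℝ + F (0, 1) * r₀ - b) (neg_pos.2 hk)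
  have hlt := hsep x₀ (r₀ + n) (by rw [hx₀]; exact_mod_cast le_add_of_nonneg_right n.cast_nonneg)
  rw [nsmul_eq_mul] at hn
  linarith

theorem IsGamma0.exists_fconj_le [CompleteSpace E] (hf : IsGamma0 f) :
    ∃ (y : E) (c : ℝ), fconj f y ≤ c := by
  obtain ⟨x, r, hx⟩ := hf.exists_eq_coe
  obtain ⟨u, k, b, -, hxb, hsep⟩ := hf.exists_separating
    (hx ▸ EReal.coe_lt_coe_iff.2 (sub_one_lt r))
  have hk : 0 < k := by linarith [hsep x r hx.le]
  exact ⟨_, _, fconj_le_of_separating hk fun z t hzt => (hsep z t hzt).le⟩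

-- A possibly vertical separating hyperplane is tilted by one affine minorant of `f`.
theorem IsGamma0.le_fconj_fconj [CompleteSpace E] (hf : IsGamma0 f) : f ≤ fconj (fconj f) := by
  refine fun x => EReal.ge_of_forall_gt_iff_ge.1 fun r hr => ?_
  obtain ⟨u, k, b, hk, hxb, hsep⟩ := hf.exists_separating hr
  obtain ⟨v, c, hv⟩ := hf.exists_fconj_le
  obtain ⟨n, hn⟩ := Archimedean.arch (c + r - ⟪x, v⟫_ℝ) (sub_pos.2 hxb)
  rw [nsmul_eq_mul] at hn
  have hK : 0 < n * k + 1 := by positivity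
  have htilt := fconj_le_of_separating (f := f) (u := (n : ℝ) • u - v) (b := n * b - c) hK
    fun z t hzt => by
      have hmin : ⟪z, v⟫_ℝ - c ≤ t := EReal.coe_le_coe_iff.1 ((fconj_le_coe_iff.1 hv z).trans hzt)
      have hmul := mul_le_mul_of_nonneg_left (hsep z t hzt).le n.cast_nonneg
      rw [inner_sub_right, inner_smul_right]
      linarith
  refine le_trans (EReal.coe_le_coe_iff.2 ?_) (coe_inner_sub_le_fconj htilt x)
  rw [sub_neg_eq_add, inner_neg_left, real_inner_smul_left, inner_sub_left, real_inner_smul_left,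
    real_inner_comm x u, real_inner_comm x v, ← sub_eq_neg_add, inv_mul_eq_div, ← sub_div,
    le_div_iff₀ hK]
  linarith

theorem le_fconj_fconj_of_le [CompleteSpace E] (hf : ∃ x, f x ≠ ⊤) (hf' : ∃ y, fconj f y ≠ ⊤)
    (hg : LowerSemicontinuous g) (hg' : ConvexEpi g) (hgf : g ≤ f) : g ≤ fconj (fconj f) := by
  obtain ⟨y, hy⟩ := hf'
  obtain ⟨x, hx⟩ := hf
  have hle : (fun x => g x ⊔ fconj (fconj f) x) ≤ f := fun z => sup_le (hgf z) (fconj_fconj_le z)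
  have hΓ : IsGamma0 fun x => g x ⊔ fconj (fconj f) x :=
    ⟨⟨x, ne_top_of_le_ne_top hx (hle x)⟩,
      fun z => ne_bot_of_le_ne_bot (fconj_ne_bot hy z) le_sup_right,
      hg.sup lowerSemicontinuous_fconj, hg'.sup convexEpi_fconj⟩
  calc g ≤ fun x => g x ⊔ fconj (fconj f) x := fun _ => le_sup_left
    _ ≤ fconj (fconj fun x => g x ⊔ fconj (fconj f) x) := hΓ.le_fconj_fconj
    _ ≤ fconj (fconj f) := fconj_antitone (fconj_antitone hle)

end Fenchel

section Prox

theorem exists_forall_le_of_midpoint_le {E : Type*} [NormedAddCommGroup E] [NormedSpace ℝ E]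
    [CompleteSpace E] {F : E → EReal} (hlsc : LowerSemicontinuous F) (hF : ∃ x, F x ≠ ⊤) {m : ℝ}
    (hm : ∀ x, m ≤ F x)
    (hmid : ∀ (p q : E) (a b : ℝ), F p ≤ a → F q ≤ b →
      F (midpoint ℝ p q) ≤ (((a + b) / 2 - ‖p - q‖ ^ 2 / 8 : ℝ) : EReal)) :
    ∃ p, ∀ y, F p ≤ F y := by
  obtain ⟨I, hI⟩ : ∃ I : ℝ, ⨅ x, F x = I := by
    obtain ⟨x, hx⟩ := hF
    exact ⟨_, (EReal.coe_toReal (ne_top_of_le_ne_top hx (iInf_le F x))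
      (ne_bot_of_le_ne_bot (EReal.coe_ne_bot m) (le_iInf hm))).symm⟩
  have hI_le (x : E) : (I : EReal) ≤ F x := hI ▸ iInf_le F x
  have hexists (n : ℕ) : ∃ p, F p < ((I + 1 / (n + 1) : ℝ) : EReal) :=
    iInf_lt_iff.1 (hI ▸ EReal.coe_lt_coe_iff.2 (lt_add_of_pos_right I Nat.one_div_pos_of_nat))
  choose p hp using hexists
  have hp_le {N n : ℕ} (hn : N ≤ n) : F (p n) ≤ ((I + 1 / (N + 1) : ℝ) : EReal) :=
    (hp n).le.trans (EReal.coe_le_coe_iff.2 (by gcongr))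
  have hdist (n k N : ℕ) (hn : N ≤ n) (hk : N ≤ k) : dist (p n) (p k) ≤ √(8 * (1 / (N + 1))) := by
    have h := EReal.coe_le_coe_iff.1 ((hI_le _).trans (hmid _ _ _ _ (hp_le hn) (hp_le hk)))
    rw [dist_eq_norm]
    exact Real.le_sqrt_of_sq_le (by linarith)
  have hcauchy : CauchySeq p := by
    refine cauchySeq_of_le_tendsto_0 _ hdist ?_
    simpa using (tendsto_one_div_add_atTop_nhds_zero_nat.const_mul (8 : ℝ)).sqrt
  obtain ⟨q, hq⟩ := cauchySeq_tendsto_of_complete hcauchy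
  refine ⟨q, fun y => le_trans (EReal.le_of_forall_lt_iff_le.1 fun r hr => ?_) (hI_le y)⟩
  refine (hlsc.isClosed_preimage r).mem_of_tendsto hq ?_
  have hlim : Tendsto (fun n : ℕ => I + 1 / ((n : ℝ) + 1)) atTop (𝓝 I) := by
    simpa using tendsto_one_div_add_atTop_nhds_zero_nat.const_add I
  filter_upwards [hlim.eventually_le_const (EReal.coe_lt_coe_iff.1 hr)] with n hn
  exact (hp n).le.trans (EReal.coe_le_coe_iff.2 hn)

/-- The function `y ↦ f y + ‖x - y‖² / 2` minimized by `prox f x`; order and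
convexity properties of `prox` are read off from it. -/
noncomputable def proxObjective {E : Type*} [NormedAddCommGroup E] (f : E → EReal)
    (x y : E) : EReal :=
  f y + ((‖x - y‖ ^ 2 / 2 : ℝ) : EReal)

variable {E : Type*} [NormedAddCommGroup E] {f g : E → EReal}

theorem proxObjective_le_coe_iff {x y : E} {c : ℝ} :
    proxObjective f x y ≤ c ↔ f y ≤ ((c - ‖x - y‖ ^ 2 / 2 : ℝ) : EReal) := by
  rw [proxObjective, EReal.coe_sub, EReal.le_sub_iff_add_le (Or.inl (EReal.coe_ne_bot _))
    (Or.inl (EReal.coe_ne_top _))]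

theorem coe_le_proxObjective_iff {x y : E} {c : ℝ} :
    c ≤ proxObjective f x y ↔ ((c - ‖x - y‖ ^ 2 / 2 : ℝ) : EReal) ≤ f y := by
  rw [proxObjective, EReal.coe_sub, EReal.sub_le_iff_le_add (Or.inl (EReal.coe_ne_bot _))
    (Or.inl (EReal.coe_ne_top _))]

theorem proxObjective_ne_top_iff {x y : E} : proxObjective f x y ≠ ⊤ ↔ f y ≠ ⊤ :=
  EReal.add_ne_top_iff_of_ne_bot_of_ne_top (EReal.coe_ne_bot _) (EReal.coe_ne_top _)

theorem lowerSemicontinuous_proxObjective (hf : LowerSemicontinuous f) (x : E) :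
    LowerSemicontinuous (proxObjective f x) :=
  hf.add' (continuous_coe_real_ereal.comp (by fun_prop)).lowerSemicontinuous fun _ =>
    EReal.continuousAt_add (Or.inr (EReal.coe_ne_bot _)) (Or.inr (EReal.coe_ne_top _))

theorem proxObjective_rscale_of_eq_coe (ξ : ℝ) (x : E) {p : E} {c : ℝ} (hp : f p = c) :
    proxObjective (rscale ξ f) x p = ((ξ * c + ‖x - p‖ ^ 2 / 2 : ℝ) : EReal) := by
  rw [proxObjective, rscale_apply_of_eq_coe ξ hp, EReal.coe_add]

variable [InnerProductSpace ℝ E]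

theorem ConvexEpi.proxObjective_midpoint_le (hf : ConvexEpi f) (x : E) {p q : E} {a b : ℝ}
    (hp : proxObjective f x p ≤ a) (hq : proxObjective f x q ≤ b) :
    proxObjective f x (midpoint ℝ p q) ≤ (((a + b) / 2 - ‖p - q‖ ^ 2 / 8 : ℝ) : EReal) := by
  rw [proxObjective_le_coe_iff] at hp hq ⊢
  have hpar := parallelogram_law_with_norm ℝ (x - p) (x - q)
  have hmid : midpoint ℝ p q = (1 / 2 : ℝ) • p + (1 / 2 : ℝ) • q := by
    rw [midpoint_eq_smul_add, smul_add, one_div, invOf_eq_inv]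
  have hsub : x - midpoint ℝ p q = (1 / 2 : ℝ) • ((x - p) + (x - q)) := by
    rw [hmid]
    module
  have hdiff : ‖(x - p) - (x - q)‖ = ‖p - q‖ := by rw [sub_sub_sub_cancel_left, norm_sub_rev]
  rw [hsub, norm_smul, hmid]
  refine (hf.apply_combo_le hp hq (by norm_num) (by norm_num) (by norm_num)).trans
    (EReal.coe_le_coe_iff.2 (le_of_eq ?_))
  rw [hdiff] at hpar
  norm_num
  linarith

theorem IsGamma0.exists_le_proxObjective [CompleteSpace E] (hf : IsGamma0 f) (x : E) :
    ∃ m : ℝ, ∀ y, m ≤ proxObjective f x y := by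
  obtain ⟨v, c, hv⟩ := hf.exists_fconj_le
  refine ⟨⟪x, v⟫_ℝ - ‖v‖ ^ 2 / 2 - c, fun y => coe_le_proxObjective_iff.2 ?_⟩
  refine le_trans (EReal.coe_le_coe_iff.2 ?_) (fconj_le_coe_iff.1 hv y)
  have hsq := norm_sub_sq_real (x - y) v
  rw [inner_sub_left] at hsq
  linarith [sq_nonneg ‖x - y - v‖]

theorem IsGamma0.proxObjective_prox_le [CompleteSpace E] (hf : IsGamma0 f) (x y : E) :
    proxObjective f x (prox f x) ≤ proxObjective f x y := by
  obtain ⟨m, hm⟩ := hf.exists_le_proxObjective x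
  obtain ⟨⟨x₀, hx₀⟩, -, hlsc, hconv⟩ := hf
  exact Classical.epsilon_spec
    (exists_forall_le_of_midpoint_le (lowerSemicontinuous_proxObjective hlsc x)
      ⟨x₀, proxObjective_ne_top_iff.2 hx₀⟩ hm fun _ _ _ _ => hconv.proxObjective_midpoint_le x) y

theorem IsGamma0.apply_prox_eq_coe [CompleteSpace E] (hf : IsGamma0 f) (x : E) :
    ∃ r : ℝ, f (prox f x) = r := by
  obtain ⟨x₀, hx₀⟩ := hf.1
  exact hf.apply_eq_coe (proxObjective_ne_top_iff.1
    (ne_top_of_le_ne_top (proxObjective_ne_top_iff.2 hx₀) (hf.proxObjective_prox_le x x₀)))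

theorem IsGamma0.apply_prox_rscale_antitone [CompleteSpace E] (hf : IsGamma0 f) (x : E) {ξ ξ' : ℝ}
    (hξ : 0 ≤ ξ) (hξξ' : ξ ≤ ξ') :
    f (prox (rscale ξ' f) x) ≤ f (prox (rscale ξ f) x) := by
  rcases hξξ'.eq_or_lt with rfl | hlt
  · exact le_rfl
  set p := prox (rscale ξ f) x
  set p' := prox (rscale ξ' f) x
  rcases eq_or_ne (f p) ⊤ with htop | htop
  · exact htop ▸ le_top
  have hξ' : 0 < ξ' := hξ.trans_lt hlt
  obtain ⟨c, hc⟩ := hf.apply_eq_coe htop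
  have htop' : f p' ≠ ⊤ := fun h => by
    obtain ⟨r, hr⟩ : ∃ r : ℝ, rscale ξ' f p' = r :=
      (isGamma0_rscale hf hξ'.le).apply_prox_eq_coe x
    rw [rscale_of_ne_zero f hξ'.ne', smulE, h, EReal.coe_mul_top_of_pos hξ'] at hr
    exact EReal.top_ne_coe r hr
  obtain ⟨c', hc'⟩ := hf.apply_eq_coe htop'
  have hmin := (isGamma0_rscale hf hξ).proxObjective_prox_le x p'
  have hmin' := (isGamma0_rscale hf hξ'.le).proxObjective_prox_le x p
  rw [proxObjective_rscale_of_eq_coe ξ x hc, proxObjective_rscale_of_eq_coe ξ x hc',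
    EReal.coe_le_coe_iff] at hmin
  rw [proxObjective_rscale_of_eq_coe ξ' x hc, proxObjective_rscale_of_eq_coe ξ' x hc',
    EReal.coe_le_coe_iff] at hmin'
  rw [hc, hc', EReal.coe_le_coe_iff]
  have hprod : (ξ' - ξ) * c' ≤ (ξ' - ξ) * c := by linarith
  exact le_of_mul_le_mul_left hprod (sub_pos.2 hlt)

end Prox

section Subgradient

/-- `u` is a subgradient of `f` at `p`, that is, `u ∈ ∂f(p)`; this characterizes `p` as
`prox f (p + u)`. Finiteness of `f p` is not built in: the condition is trivial if `f p = -∞`. -/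
def IsSubgradientAt {E : Type*} [NormedAddCommGroup E] [InnerProductSpace ℝ E] (f : E → EReal)
    (u p : E) : Prop :=
  ∀ z, f p + (⟪z - p, u⟫_ℝ : EReal) ≤ f z

variable {E : Type*} [NormedAddCommGroup E] [InnerProductSpace ℝ E] {f g : E → EReal}

theorem isSubgradientAt_iff_of_eq_coe {u p : E} {r : ℝ} (hr : f p = r) :
    IsSubgradientAt f u p ↔ ∀ z, ((r + ⟪z - p, u⟫_ℝ : ℝ) : EReal) ≤ f z := by
  simp only [IsSubgradientAt, hr, EReal.coe_add]

theorem IsGamma0.isSubgradientAt_prox [CompleteSpace E] (hf : IsGamma0 f) (x : E) :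
    IsSubgradientAt f (x - prox f x) (prox f x) := by
  obtain ⟨r, hr⟩ := hf.apply_prox_eq_coe x
  refine (isSubgradientAt_iff_of_eq_coe hr).2 fun z => EReal.le_of_forall_lt_iff_le.1 fun t ht => ?_
  set p := prox f x with hp
  have hstep : ∀ a ∈ Set.Ioc (0 : ℝ) 1, r + ⟪z - p, x - p⟫_ℝ ≤ t + a * (‖z - p‖ ^ 2 / 2) := by
    rintro a ⟨ha, ha'⟩
    have hle := hf.proxObjective_prox_le x ((1 - a) • p + a • z)
    rw [← hp, proxObjective, hr, ← EReal.coe_add, coe_le_proxObjective_iff] at hle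
    have hcombo := hle.trans
      (hf.2.2.2.apply_combo_le hr.le ht.le (sub_nonneg.2 ha') ha.le (sub_add_cancel 1 a))
    rw [EReal.coe_le_coe_iff, show x - ((1 - a) • p + a • z) = (x - p) - a • (z - p) by module,
      norm_sub_sq_real (x - p), inner_smul_right, norm_smul, real_inner_comm, mul_pow,
      Real.norm_eq_abs, sq_abs] at hcombo
    refine le_of_mul_le_mul_left ?_ ha
    linarith
  have hlim : Tendsto (fun a : ℝ => t + a * (‖z - p‖ ^ 2 / 2)) (𝓝[>] 0) (𝓝 t) := by
    have hcont : Continuous fun a : ℝ => t + a * (‖z - p‖ ^ 2 / 2) := by fun_prop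
    simpa using (hcont.tendsto 0).mono_left nhdsWithin_le_nhds
  refine EReal.coe_le_coe_iff.2 (ge_of_tendsto hlim ?_)
  filter_upwards [Ioc_mem_nhdsGT (zero_lt_one' ℝ)] using hstep

theorem IsSubgradientAt.prox_add_eq {u p : E} {r : ℝ} (hu : IsSubgradientAt f u p) (hr : f p = r) :
    prox f (p + u) = p := by
  have hsub := (isSubgradientAt_iff_of_eq_coe hr).1 hu
  have hsq (z : E) : ‖p + u - z‖ ^ 2 = ‖u‖ ^ 2 - 2 * ⟪z - p, u⟫_ℝ + ‖z - p‖ ^ 2 := by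
    rw [show p + u - z = u - (z - p) by abel, norm_sub_sq_real, real_inner_comm]
  have hp : proxObjective f (p + u) p = ((r + ‖u‖ ^ 2 / 2 : ℝ) : EReal) := by
    rw [proxObjective, hr, add_sub_cancel_left, EReal.coe_add]
  have hmin (z : E) : proxObjective f (p + u) p ≤ proxObjective f (p + u) z := by
    rw [hp, coe_le_proxObjective_iff]
    refine le_trans (EReal.coe_le_coe_iff.2 ?_) (hsub z)
    linarith [hsq z, sq_nonneg ‖z - p‖]
  have hprox : proxObjective f (p + u) (prox f (p + u)) ≤ proxObjective f (p + u) p :=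
    Classical.epsilon_spec
      (p := fun q => ∀ z, proxObjective f (p + u) q ≤ proxObjective f (p + u) z) ⟨p, hmin⟩ p
  rw [hp, proxObjective_le_coe_iff] at hprox
  have hle := EReal.coe_le_coe_iff.1 ((hsub _).trans hprox)
  have hzero : ‖prox f (p + u) - p‖ ^ 2 ≤ 0 := by linarith [hsq (prox f (p + u))]
  exact sub_eq_zero.1 (norm_eq_zero.1 (pow_eq_zero_iff two_ne_zero |>.1
    (hzero.antisymm (sq_nonneg _))))

theorem prox_smulE_fconj {p w : E} {γ r : ℝ} (hγ : 0 < γ) (hp : fconj g p ≤ r)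
    (hw : g w ≤ ((⟪p, w⟫_ℝ - r : ℝ) : EReal)) : prox (smulE γ (fconj g)) (p + γ • w) = p := by
  have hle (z : E) : ((r + ⟪z - p, w⟫_ℝ : ℝ) : EReal) ≤ fconj g z := by
    refine le_trans (EReal.coe_le_coe_iff.2 (le_of_eq ?_)) (coe_inner_sub_le_fconj hw z)
    rw [inner_sub_left, real_inner_comm z w]
    ring
  have hpr : fconj g p = r := hp.antisymm (by simpa using hle p)
  have hγr : smulE γ (fconj g) p = ((γ * r : ℝ) : EReal) := by rw [smulE, hpr, EReal.coe_mul]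
  refine IsSubgradientAt.prox_add_eq ((isSubgradientAt_iff_of_eq_coe hγr).2 fun z => ?_) hγr
  rw [smulE, ereal_coe_le_coe_mul_iff hγ, inner_smul_right, ← mul_add,
    mul_div_cancel_left₀ _ hγ.ne']
  exact hle z

theorem prox_convexIndicator {C : Set E} (hC : C.Nonempty) (x : E) :
    prox (convexIndicator C) x = projC C x := by
  refine congrArg Classical.epsilon (funext fun p => propext ⟨fun h => ?_, fun h y => ?_⟩)
  · have hp : p ∈ C := by
      by_contra hp
      obtain ⟨y, hy⟩ := hC
      simpa [convexIndicator, hp, hy, ← EReal.coe_pow] using h y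
    refine ⟨hp, fun y hy => ?_⟩
    have hle := h y
    rw [convexIndicator, if_pos hp, convexIndicator, if_pos hy, zero_add, zero_add,
      EReal.coe_le_coe_iff, div_le_div_iff_of_pos_right two_pos] at hle
    exact le_of_sq_le_sq hle (norm_nonneg _)
  · rw [convexIndicator, if_pos h.1, zero_add, convexIndicator]
    split_ifs with hy
    · rw [zero_add, EReal.coe_le_coe_iff]
      gcongr
      exact h.2 y hy
    · rw [EReal.top_add_coe]
      exact le_top

theorem inner_sub_projC_le_zero [CompleteSpace E] {C : Set E} (hcl : IsClosed C) (hC : Convex ℝ C)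
    (x : E) {z : E} (hz : z ∈ C) : ⟪z - projC C x, x - projC C x⟫_ℝ ≤ 0 := by
  have hΓ := isGamma0_convexIndicator ⟨z, hz⟩ hcl hC
  obtain ⟨r, hr⟩ := hΓ.apply_prox_eq_coe x
  have hle := (isSubgradientAt_iff_of_eq_coe hr).1 (hΓ.isSubgradientAt_prox x) z
  rw [prox_convexIndicator ⟨z, hz⟩] at hle hr
  have hnonneg : 0 ≤ r := by
    rw [← EReal.coe_nonneg, ← hr, convexIndicator]
    split_ifs <;> simp
  rw [convexIndicator, if_pos hz, ← EReal.coe_zero, EReal.coe_le_coe_iff] at hle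
  linarith

theorem inner_sub_smul_projC_le [CompleteSpace E] {C : Set E} (hcl : IsClosed C) (hC : Convex ℝ C)
    {γ : ℝ} (hγ : 0 < γ) (x : E) {z : E} (hz : z ∈ C) :
    ⟪z, x - γ • projC C (γ⁻¹ • x)⟫_ℝ ≤ ⟪projC C (γ⁻¹ • x), x - γ • projC C (γ⁻¹ • x)⟫_ℝ := by
  have hsmul : x - γ • projC C (γ⁻¹ • x) = γ • (γ⁻¹ • x - projC C (γ⁻¹ • x)) := by
    rw [smul_sub, smul_inv_smul₀ hγ.ne']
  rw [← sub_nonpos, ← inner_sub_left, hsmul, inner_smul_right]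
  exact mul_nonpos_of_nonneg_of_nonpos hγ.le (inner_sub_projC_le_zero hcl hC _ hz)

end Subgradient

section BasEnv

variable {E : Type*} [NormedAddCommGroup E] [InnerProductSpace ℝ E] {f : E → EReal}

theorem le_pbas {E : Type*} {f : E → EReal} : f ≤ pbas f := by
  intro z
  unfold pbas
  split_ifs
  · exact le_rfl
  · exact le_top

theorem IsGamma0.le_basEnv [CompleteSpace E] (hf : IsGamma0 f) : f ≤ basEnv f :=
  hf.le_fconj_fconj.trans (fconj_antitone (fconj_antitone le_pbas))

theorem basEnv_le {z : E} (hbot : f z ≠ ⊥) (hz : f z < 0) : basEnv f z ≤ f z :=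
  (fconj_fconj_le z).trans_eq (if_pos ⟨bot_lt_iff_ne_bot.2 hbot, hz⟩)

theorem isGamma0_basEnv [CompleteSpace E] (hf : IsGamma0 f) {b : E} (hb : f b < 0) :
    IsGamma0 (basEnv f) := by
  obtain ⟨v, c, hv⟩ := hf.exists_fconj_le
  exact isGamma0_fconj
    ⟨v, ne_top_of_le_ne_top (EReal.coe_ne_top c) ((fconj_antitone le_pbas v).trans hv)⟩
    ⟨b, (((basEnv_le (hf.2.1 b) hb).trans_lt hb).trans EReal.zero_lt_top).ne⟩

theorem basEnv_eq_zero [CompleteSpace E] (hf : IsGamma0 f) {b q : E} (hb : f b < 0)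
    (hq : f q = 0) : basEnv f q = 0 := by
  have hclosed : IsClosed {z | basEnv f z ≤ 0} := lowerSemicontinuous_fconj.isClosed_preimage 0
  have hsub : {z | f z < 0} ⊆ {z | basEnv f z ≤ 0} := fun z hz =>
    (basEnv_le (hf.2.1 z) hz).trans hz.le
  exact le_antisymm (closure_minimal hsub hclosed (hf.2.2.2.mem_closure_neg hq.le hb))
    (hq ▸ hf.le_basEnv q)

end BasEnv

section Perspective

variable {H G : Type*} [NormedAddCommGroup H] [InnerProductSpace ℝ H]
  [NormedAddCommGroup G] [InnerProductSpace ℝ G] {φ : H → EReal} {s : G → EReal}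

theorem sdom_eq_neg_lt_zero (hs : IsGamma0 fun v => -(s v)) : sdom s = {v | -(s v) < 0} := by
  ext v
  have htop : s v < ⊤ := lt_top_iff_ne_top.2 fun h => hs.2.1 v (EReal.neg_eq_bot_iff.2 h)
  simp [sdom, htop, EReal.neg_lt_zero]

theorem mem_closure_sdom (hs : IsGamma0 fun v => -(s v)) {b q : G} (hb : b ∈ sdom s)
    (hq : s q = 0) : q ∈ closure (sdom s) := by
  rw [sdom_eq_neg_lt_zero hs]
  exact hs.2.2.2.mem_closure_neg (EReal.neg_eq_zero_iff.2 hq).le (EReal.neg_lt_zero.2 hb.1)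

theorem exists_apply_eq_coe_of_mem_sdom {G : Type*} {s : G → EReal} {b : G} (hb : b ∈ sdom s) :
    ∃ σ : ℝ, 0 < σ ∧ s b = σ := by
  obtain ⟨hpos, hlt⟩ := hb
  lift s b to ℝ using ⟨hlt.ne, hpos.ne_bot⟩ with σ
  exact ⟨σ, EReal.coe_pos.1 hpos, rfl⟩

theorem pairHG_add_smul (p u : H) (q w : G) (γ : ℝ) :
    pairHG (p + γ • u) (q + γ • w) = pairHG p q + γ • pairHG u w :=
  rfl

theorem inner_pairHG (x u : H) (y v : G) :
    ⟪pairHG x y, pairHG u v⟫_ℝ = ⟪x, u⟫_ℝ + ⟪y, v⟫_ℝ :=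
  rfl

theorem prePersp_pairHG_smul {b : G} {σ : ℝ} (hσ : 0 < σ) (hb : s b = σ) (a : H) :
    prePersp φ s (pairHG (σ • a) b) = σ * φ a := by
  have hpos : 0 < s b ∧ s b < ⊤ := hb ▸ ⟨EReal.coe_pos.2 hσ, EReal.coe_lt_top σ⟩
  refine (if_pos hpos).trans ?_
  change s b * φ ((s b).toReal⁻¹ • σ • a) = σ * φ a
  rw [hb, EReal.toReal_coe, inv_smul_smul₀ hσ.ne']

theorem le_prePersp_iff {F : WithLp 2 (H × G) → EReal} :
    F ≤ prePersp φ s ↔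
      ∀ (a : H) (b : G) (σ : ℝ), 0 < σ → s b = σ → F (pairHG (σ • a) b) ≤ σ * φ a := by
  refine ⟨fun h a b σ hσ hb => prePersp_pairHG_smul hσ hb a ▸ h _, fun h z => ?_⟩
  obtain ⟨x, b, rfl⟩ : ∃ x b, z = pairHG x b := ⟨_, _, rfl⟩
  by_cases hb : b ∈ sdom s
  · obtain ⟨σ, hσ, hbσ⟩ := exists_apply_eq_coe_of_mem_sdom hb
    rw [← smul_inv_smul₀ hσ.ne' x, prePersp_pairHG_smul hσ hbσ]
    exact h _ b σ hσ hbσ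
  · exact le_top.trans_eq (if_neg hb).symm

theorem coe_mul_fconj_le_coe_iff {u : H} {σ t : ℝ} (hσ : 0 < σ) :
    (σ : EReal) * fconj φ u ≤ t ↔ ∀ a, ((⟪σ • a, u⟫_ℝ - t : ℝ) : EReal) ≤ σ * φ a := by
  rw [ereal_coe_mul_le_coe_iff hσ, fconj_le_coe_iff]
  refine forall_congr' fun a => ?_
  rw [ereal_coe_le_coe_mul_iff hσ, real_inner_smul_left, sub_div, mul_div_cancel_left₀ _ hσ.ne']

theorem fconj_prePersp_le_iff {u : H} {w : G} {c : ℝ} :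
    fconj (prePersp φ s) (pairHG u w) ≤ c ↔
      ∀ b ∈ sdom s, s b * fconj φ u ≤ ((c - ⟪b, w⟫_ℝ : ℝ) : EReal) := by
  have hinner (σ : ℝ) (a : H) (b : G) :
      ⟪pairHG (σ • a) b, pairHG u w⟫_ℝ - c = ⟪σ • a, u⟫_ℝ - (c - ⟪b, w⟫_ℝ) := by
    rw [inner_pairHG]
    ring
  refine fconj_le_coe_iff.trans (le_prePersp_iff.trans ⟨fun h b hb => ?_, fun h a b σ hσ hb => ?_⟩)
  · obtain ⟨σ, hσ, hbσ⟩ := exists_apply_eq_coe_of_mem_sdom hb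
    rw [hbσ, coe_mul_fconj_le_coe_iff hσ]
    exact fun a => hinner σ a b ▸ h a b σ hσ hbσ
  · have hle := h b (hb ▸ ⟨EReal.coe_pos.2 hσ, EReal.coe_lt_top σ⟩ : 0 < s b ∧ s b < ⊤)
    rw [hb, coe_mul_fconj_le_coe_iff hσ] at hle
    rw [hinner]
    exact hle a

theorem exists_prePersp_ne_top (hφ : ∃ a, φ a ≠ ⊤) (hs : (sdom s).Nonempty) :
    ∃ z, prePersp φ s z ≠ ⊤ := by
  obtain ⟨a, ha⟩ := hφ
  obtain ⟨b, hb⟩ := hs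
  obtain ⟨σ, hσ, hbσ⟩ := exists_apply_eq_coe_of_mem_sdom hb
  refine ⟨pairHG (σ • a) b, ?_⟩
  rw [prePersp_pairHG_smul hσ hbσ]
  simp [EReal.mul_eq_top, ha, hσ.not_gt]

theorem persp_eq_fconj_fconj [CompleteSpace H] [CompleteSpace G]
    (h : ∃ z, prePersp φ s z ≠ ⊤) (h' : ∃ z, fconj (prePersp φ s) z ≠ ⊤) :
    persp φ s = fconj (fconj (prePersp φ s)) := by
  refine funext fun z => le_antisymm (sSup_le ?_) (le_sSup ?_)
  · rintro _ ⟨g, hlsc, hconv, hle, rfl⟩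
    exact le_fconj_fconj_of_le h h' hlsc hconv hle z
  · exact ⟨_, lowerSemicontinuous_fconj, convexEpi_fconj, fconj_fconj_le, rfl⟩

theorem fconj_fconj_prePersp_le (hφ : ∀ u, 0 ≤ fconj φ u) {p : H} {q : G}
    (hq : q ∈ closure (sdom s)) {R : ℝ} (hp : ∀ u ∈ edom (fconj φ), ⟪u, p⟫_ℝ ≤ R) :
    fconj (fconj (prePersp φ s)) (pairHG p q) ≤ R := by
  refine fconj_le_coe_iff.2 fun z => EReal.le_of_forall_lt_iff_le.1 fun c hc => ?_
  obtain ⟨u, w, rfl⟩ : ∃ u w, z = pairHG u w := ⟨_, _, rfl⟩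
  have hmul := fconj_prePersp_le_iff.1 hc.le
  have hu : u ∈ edom (fconj φ) := by
    obtain ⟨b, hb⟩ := closure_nonempty_iff.1 ⟨q, hq⟩
    obtain ⟨σ, hσ, hbσ⟩ := exists_apply_eq_coe_of_mem_sdom hb
    have hle := hmul b hb
    rw [hbσ, ereal_coe_mul_le_coe_iff hσ] at hle
    exact hle.trans_lt (EReal.coe_lt_top _)
  have hsub : sdom s ⊆ {b | ⟪b, w⟫_ℝ ≤ c} := fun b hb =>
    sub_nonneg.1 (EReal.coe_nonneg.1 ((mul_nonneg hb.1.le (hφ u)).trans (hmul b hb)))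
  have hqw : ⟪q, w⟫_ℝ ≤ c :=
    closure_minimal hsub (isClosed_le (by fun_prop) continuous_const) hq
  rw [EReal.coe_le_coe_iff, inner_pairHG, real_inner_comm q w]
  linarith [hp u hu]

theorem prox_smulE_persp [CompleteSpace H] [CompleteSpace G] (hφ : ∀ u, 0 ≤ fconj φ u)
    {γ : ℝ} (hγ : 0 < γ) {p u : H} {q w : G} (hq : q ∈ closure (sdom s))
    (hp : ∀ v ∈ edom (fconj φ), ⟪v, p⟫_ℝ ≤ ⟪u, p⟫_ℝ)
    (hw : ∀ b ∈ sdom s, s b * fconj φ u ≤ ((⟪q, w⟫_ℝ - ⟪b, w⟫_ℝ : ℝ) : EReal)) :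
    prox (smulE γ (persp φ s)) (pairHG (p + γ • u) (q + γ • w)) = pairHG p q := by
  have hφ' : ∃ a, φ a ≠ ⊤ :=
    exists_ne_top_of_fconj_ne_bot (ne_bot_of_le_ne_bot EReal.zero_ne_bot (hφ u))
  have hconj := fconj_prePersp_le_iff.2 hw
  rw [persp_eq_fconj_fconj (exists_prePersp_ne_top hφ' (closure_nonempty_iff.1 ⟨q, hq⟩))
    ⟨_, ne_top_of_le_ne_top (EReal.coe_ne_top _) hconj⟩,
    pairHG_add_smul]
  refine prox_smulE_fconj hγ (fconj_fconj_prePersp_le hφ hq hp) ?_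
  rwa [inner_pairHG, real_inner_comm, add_sub_cancel_left]

theorem eta7eq.eq_of_le [CompleteSpace H] [CompleteSpace G] (hψ : IsGamma0 (fconj φ))
    (hφ : ∀ u, 0 ≤ fconj φ u) (hD : IsGamma0 (basEnv fun v => -(s v))) {γ : ℝ} (hγ : 0 < γ) {x : H}
    {y : G} {η η' : ℝ} (hη : 0 ≤ η) (hηη' : η ≤ η')
    (htop : fconj φ (prox (rscale (η / γ) (fconj φ)) (γ⁻¹ • x)) ≠ ⊤)
    (h : eta7eq φ s γ x y η) (h' : eta7eq φ s γ x y η') : η = η' := by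
  have hα := hψ.apply_prox_rscale_antitone (γ⁻¹ • x) (div_nonneg hη hγ.le)
    (div_le_div_of_nonneg_right hηη' hγ.le)
  have hα' := EReal.toReal_le_toReal hα (ne_bot_of_le_ne_bot EReal.zero_ne_bot (hφ _)) htop
  have hmono := hD.apply_prox_rscale_antitone y
    (mul_nonneg hγ.le (EReal.toReal_nonneg (hφ _))) (mul_le_mul_of_nonneg_left hα' hγ.le)
  unfold eta7eq at h h'
  rw [ereal_eq_coe_neg_of_add_coe_eq_zero h, ereal_eq_coe_neg_of_add_coe_eq_zero h',
    EReal.coe_le_coe_iff] at hmono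
  linarith

theorem mul_le_of_isSubgradientAt_smulE_basEnv (hs : ∀ v, s v ≠ ⊤) {γ α : ℝ} (hγ : 0 < γ)
    (hα : 0 < α) {q w b : G} (hq : basEnv (fun v => -(s v)) q = 0)
    (hw : IsSubgradientAt (smulE (γ * α) (basEnv fun v => -(s v))) w q) (hb : b ∈ sdom s) :
    s b * α ≤ ((⟪q, γ⁻¹ • w⟫_ℝ - ⟪b, γ⁻¹ • w⟫_ℝ : ℝ) : EReal) := by
  obtain ⟨σ, -, hbσ⟩ := exists_apply_eq_coe_of_mem_sdom hb
  have hbE : basEnv (fun v => -(s v)) b ≤ ((-σ : ℝ) : EReal) := by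
    rw [EReal.coe_neg, ← hbσ]
    exact basEnv_le (EReal.neg_eq_bot_iff.not.2 (hs b)) (EReal.neg_lt_zero.2 hb.1)
  have hle := hw b
  rw [smulE, hq, mul_zero, zero_add, smulE, ereal_coe_le_coe_mul_iff (mul_pos hγ hα)] at hle
  have hdiv := EReal.coe_le_coe_iff.1 (hle.trans hbE)
  rw [div_le_iff₀ (mul_pos hγ hα), inner_sub_left] at hdiv
  rw [hbσ, ← EReal.coe_mul, EReal.coe_le_coe_iff, ← inner_sub_left, inner_smul_right,
    le_inv_mul_iff₀ hγ, inner_sub_left]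
  linarith

theorem prox_smulE_persp_of_apply_prox_eq_zero [CompleteSpace H] [CompleteSpace G]
    (hφ : ∀ u, 0 ≤ fconj φ u) (hs : IsGamma0 fun v => -(s v)) {b : G} (hb : b ∈ sdom s)
    {γ α : ℝ} (hγ : 0 < γ) (hα : 0 < α) {x u : H} {y q : G}
    (hu : u = projC (closure (edom (fconj φ))) (γ⁻¹ • x)) (hαu : fconj φ u = α)
    (hq : q = prox (smulE (γ * α) (basEnv fun v => -(s v))) y) (hsq : s q = 0) :
    prox (smulE γ (persp φ s)) (pairHG x y) = pairHG (x - γ • u) q := by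
  have hb' : -(s b) < 0 := EReal.neg_lt_zero.2 hb.1
  have hD : IsGamma0 (basEnv fun v => -(s v)) := isGamma0_basEnv hs hb'
  have hDq : basEnv (fun v => -(s v)) q = 0 :=
    basEnv_eq_zero hs hb' (EReal.neg_eq_zero_iff.2 hsq)
  have hsubgrad : IsSubgradientAt (smulE (γ * α) (basEnv fun v => -(s v))) (y - q) q :=
    hq ▸ (isGamma0_smulE hD (mul_pos hγ hα)).isSubgradientAt_prox y
  have hp (v : H) (hv : v ∈ edom (fconj φ)) : ⟪v, x - γ • u⟫_ℝ ≤ ⟪u, x - γ • u⟫_ℝ :=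
    hu ▸ inner_sub_smul_projC_le isClosed_closure convexEpi_fconj.convex_edom.closure hγ x
      (subset_closure hv)
  have hprox := prox_smulE_persp (w := γ⁻¹ • (y - q)) hφ hγ (mem_closure_sdom hs hb hsq) hp
    fun c hc => hαu ▸ mul_le_of_isSubgradientAt_smulE_basEnv
      (fun v h => hs.2.1 v (EReal.neg_eq_bot_iff.2 h)) hγ hα hDq hsubgrad hc
  rwa [sub_add_cancel, smul_inv_smul₀ hγ.ne', add_sub_cancel] at hprox

theorem eta7eq_zero {γ : ℝ} {x u : H} {y : G} (hψ : (edom (fconj φ)).Nonempty)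
    (hu : u = projC (closure (edom (fconj φ))) (γ⁻¹ • x)) (hγu : γ * (fconj φ u).toReal ≠ 0)
    (hq : basEnv (fun v => -(s v))
      (prox (smulE (γ * (fconj φ u).toReal) (basEnv fun v => -(s v))) y) = 0) :
    eta7eq φ s γ x y 0 := by
  rw [eta7eq, zero_div, rscale_zero, prox_convexIndicator hψ.closure, ← hu,
    rscale_of_ne_zero _ hγu, hq, EReal.coe_zero, add_zero]

end Perspective

theorem stmt12_general {H G : Type*} [NormedAddCommGroup H] [InnerProductSpace ℝ H]
    [CompleteSpace H] [NormedAddCommGroup G] [InnerProductSpace ℝ G] [CompleteSpace G]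
    (φ : H → EReal) (s : G → EReal) (hc1 : ∀ u : H, 0 ≤ fconj φ u)
    (hs : IsGamma0 (fun v : G => -(s v)))
    (hS : ∃ v : G, 0 < s v ∧ s v < ⊤)
    (γ : ℝ) (hγ : 0 < γ) (x : H) (y : G) (hmem : (x, y) ∈ Omega2 φ s γ) :
    eta7eq φ s γ x y 0 ∧ (∀ η : ℝ, 0 ≤ η → eta7eq φ s γ x y η → η = 0) ∧
    prox (smulE γ (persp φ s)) (pairHG x y) =
      pairHG (x - γ • projC (closure (edom (fconj φ))) (γ⁻¹ • x))
        (prox (smulE (γ * (fconj φ (projC (closure (edom (fconj φ))) (γ⁻¹ • x))).toReal)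
          (basEnv fun v => -(s v))) y) := by
  obtain ⟨b, hb⟩ := hS
  obtain ⟨⟨hpos, hlt⟩, hsq⟩ := hmem
  have hb' : -(s b) < 0 := EReal.neg_lt_zero.2 hb.1
  set u := projC (closure (edom (fconj φ))) (γ⁻¹ • x) with hu
  set α := (fconj φ u).toReal
  have hα : 0 < α := EReal.toReal_pos hpos hlt.ne
  have hαu : fconj φ u = α := (EReal.coe_toReal hlt.ne hpos.ne_bot).symm
  have hψ : IsGamma0 (fconj φ) :=
    isGamma0_fconj (exists_ne_top_of_fconj_ne_bot hpos.ne_bot) ⟨u, hlt.ne⟩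
  have hη0 : eta7eq φ s γ x y 0 := eta7eq_zero ⟨u, hlt⟩ hu (mul_pos hγ hα).ne'
    (basEnv_eq_zero hs hb' (EReal.neg_eq_zero_iff.2 hsq))
  refine ⟨hη0, fun η hη h => ?_, prox_smulE_persp_of_apply_prox_eq_zero hc1 hs hb hγ hα hu hαu
    rfl hsq⟩
  refine (hη0.eq_of_le hψ hc1 (isGamma0_basEnv hs hb') hγ le_rfl hη ?_ h).symm
  rw [zero_div, rscale_zero, prox_convexIndicator ⟨u, subset_closure hlt⟩]
  exact hlt.ne

/-- Proposition 4.2(ii). -/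
theorem stmt12 {H G : Type*} [NormedAddCommGroup H] [InnerProductSpace ℝ H] [CompleteSpace H]
    [NormedAddCommGroup G] [InnerProductSpace ℝ G] [CompleteSpace G]
    (φ : H → EReal) (s : G → EReal) (hφ : IsGamma0 φ)
    (hc1 : ∀ u : H, 0 ≤ fconj φ u)
    (hc2 : ∃ u : H, 0 < fconj φ u ∧ fconj φ u < ⊤)
    (hs : IsGamma0 (fun v : G => -(s v)))
    (hS : ∃ v : G, 0 < s v ∧ s v < ⊤)
    (γ : ℝ) (hγ : 0 < γ) (x : H) (y : G) (hmem : (x, y) ∈ Omega2 φ s γ) :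
    eta7eq φ s γ x y 0 ∧ (∀ η : ℝ, 0 ≤ η → eta7eq φ s γ x y η → η = 0) ∧
    prox (smulE γ (persp φ s)) (pairHG x y) =
      pairHG (x - γ • projC (closure (edom (fconj φ))) (γ⁻¹ • x))
        (prox (smulE (γ * (fconj φ (projC (closure (edom (fconj φ))) (γ⁻¹ • x))).toReal)
          (basEnv fun v => -(s v))) y) :=
  stmt12_general φ s hc1 hs hS γ hγ x y hmem
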